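/- arXiv:1706.04255 — 3 statements merged into one kernel-verified Lean document; each statement's English description precedes it below -/
import Mathlib

section
/- Let u and v be distinct nonadjacent vertices of a connected finite simple graph G, let F be the graph obtained from G by adding the edge uv, and let P be any path from u to v in G. Then: (1) every bridge e of G that belongs to P is covered by uv, i.e., u and v lie in the two different components of G − e (equivalently, e is not a bridge of F); and (2) if Q₁, …, Q_s are the biconnected components of G crossed by P, then the subgraph of F induced by V(Q₁) ∪ … ∪ V(Q_s) is a biconnected component of F. -/
open SimpleGraph

/-- The graph obtained from `G` by deleting all its bridges; its connected
components are the biconnected components of `G`. -/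
def bicompGraph {α : Type*} (G : SimpleGraph α) : SimpleGraph α :=
  G.deleteEdges {e | G.IsBridge e}

/-!
A bridge `e` of `G` lies on a trail `P` from `u` to `v` exactly when deleting it separates `u`
from `v`. If `e` is not on `P`, then `u` and `v` are already connected in `G - e`, so the new edge
`uv` creates no connection there and `e` remains a bridge; if `e` is on `P`, the new edge bypasses
it. Hence adding `uv` destroys precisely the bridges on `P`, and the bridgeless part of the new
graph is that of `G` together with the closed trail `P + uv`. Its component through `u` is therefore
the union of the biconnected components of `G` met by `P`.
-/

section

variable {V : Type*} {G : SimpleGraph V} {u v a b : V} {P : G.Walk u v} {e : Sym2 V}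

lemma reachable_sup_edge_iff (h : G.Reachable u v) :
    (G ⊔ edge u v).Reachable a b ↔ G.Reachable a b := by
  refine ⟨?_, .mono le_sup_left⟩
  rintro ⟨p⟩
  induction p with
  | nil => rfl
  | cons hadj _ ih =>
    refine .trans ?_ ih
    rcases hadj with hG | huv
    · exact hG.reachable
    · obtain ⟨⟨rfl, rfl⟩ | ⟨rfl, rfl⟩, -⟩ := (edge_adj ..).1 huv
      exacts [h, h.symm]

lemma supp_connectedComponentMk_eq_setOf_reachable {H K : SimpleGraph V} {s : Set V}
    (hHK : H ≤ K) (hK : ∀ a b, K.Adj a b → H.Adj a b ∨ a ∈ s)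
    (hu : u ∈ s) (hs : ∀ x ∈ s, K.Reachable u x) :
    (K.connectedComponentMk u).supp = {w | ∃ x ∈ s, H.Reachable x w} := by
  ext w
  rw [ConnectedComponent.mem_supp_iff, ConnectedComponent.eq, Set.mem_ofPred_eq]
  constructor
  · rintro ⟨p⟩
    induction p with
    | nil => exact ⟨_, hu, .rfl⟩
    | cons hadj _ ih =>
      obtain ⟨x, hx, hxc⟩ := ih hu hs
      rcases hK _ _ hadj with hH | ha
      · exact ⟨x, hx, hxc.trans hH.symm.reachable⟩
      · exact ⟨_, ha, .rfl⟩
  · rintro ⟨x, hx, hxw⟩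
    exact ((hs x hx).trans (hxw.mono hHK)).symm

lemma mem_edges_iff_not_reachable_deleteEdges (he : G.IsBridge e) (hP : P.IsTrail) :
    e ∈ P.edges ↔ ¬ (G.deleteEdges {e}).Reachable u v := by
  refine ⟨fun heP huv => ?_, P.mem_edges_of_not_reachable_deleteEdges⟩
  induction e with | h x y
  -- `u` and `v` lie on the same side of the bridge, so a trail would have to cross it twice.
  by_cases huy : (G.deleteEdges {s(x, y)}).Reachable u y
  · have hux : ¬ (G.deleteEdges {s(x, y)}).Reachable u x := fun hux =>
      isBridge_iff.1 he (hux.symm.trans huy)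
    rw [Sym2.eq_swap] at heP hux huv
    exact hP.not_mem_edges_of_not_reachable hux (fun hvx => hux (huv.trans hvx)) heP
  · exact hP.not_mem_edges_of_not_reachable huy (fun hvy => huy (huv.trans hvy)) heP

lemma reachable_deleteEdges_sup_edge (he : e ≠ s(u, v)) :
    ((G ⊔ edge u v).deleteEdges {e}).Reachable u v := by
  by_cases huv : u = v
  · subst huv
    rfl
  · refine Adj.reachable (deleteEdges_adj.2 ⟨.inr ?_, he.symm⟩)
    exact (edge_adj ..).2 ⟨.inl ⟨rfl, rfl⟩, huv⟩

lemma isBridge_sup_edge_of_reachable_deleteEdges (he : G.IsBridge e)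
    (huv : (G.deleteEdges {e}).Reachable u v) : (G ⊔ edge u v).IsBridge e := by
  have hne : e ≠ s(u, v) := by
    rintro rfl
    exact isBridge_iff.1 he huv
  have hdelete : (G ⊔ edge u v).deleteEdges {e} = G.deleteEdges {e} ⊔ edge u v := by
    ext a b
    simp only [deleteEdges_adj, sup_adj, adj_edge, Set.mem_singleton_iff]
    grind
  induction e with | h x y
  rw [isBridge_iff, hdelete, reachable_sup_edge_iff huv]
  exact isBridge_iff.1 he

lemma isBridge_sup_edge_iff_notMem_edges (hP : P.IsTrail) (huvP : s(u, v) ∉ P.edges) :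
    (G ⊔ edge u v).IsBridge e ↔ G.IsBridge e ∧ e ∉ P.edges := by
  have hmem : (G ⊔ edge u v).IsBridge e →
      (e ∈ P.edges ↔ ¬ ((G ⊔ edge u v).deleteEdges {e}).Reachable u v) := fun he => by
    rw [← mem_edges_iff_not_reachable_deleteEdges he (hP.mapLe le_sup_left),
      Walk.edges_mapLe_eq_edges]
  constructor
  · intro he
    have hne : e ≠ s(u, v) := by
      rintro rfl
      exact huvP ((hmem he).2 (isBridge_iff.1 he))
    exact ⟨he.anti le_sup_left,
      fun heP => (hmem he).1 heP (reachable_deleteEdges_sup_edge hne)⟩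
  · rintro ⟨he, heP⟩
    refine isBridge_sup_edge_of_reachable_deleteEdges he ?_
    exact not_not.1 (mt (mem_edges_iff_not_reachable_deleteEdges he hP).2 heP)

lemma bicompGraph_adj : (bicompGraph G).Adj a b ↔ G.Adj a b ∧ ¬ G.IsBridge s(a, b) :=
  deleteEdges_adj

lemma bicompGraph_sup_edge_adj (hP : P.IsTrail) (huvP : s(u, v) ∉ P.edges) :
    (bicompGraph (G ⊔ edge u v)).Adj a b ↔
      (bicompGraph G).Adj a b ∨ s(a, b) ∈ P.edges ∨ (edge u v).Adj a b := by
  have hPG : s(a, b) ∈ P.edges → G.Adj a b := P.adj_of_mem_edges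
  have huv : ¬ G.IsBridge s(u, v) := fun h => huvP (isBridge_iff_forall_walk_mem_edges.1 h P)
  simp only [bicompGraph_adj, isBridge_sup_edge_iff_notMem_edges hP huvP, sup_adj, adj_edge]
  grind

lemma supp_bicompGraph_sup_edge (hP : P.IsTrail) (huvP : s(u, v) ∉ P.edges) :
    ((bicompGraph (G ⊔ edge u v)).connectedComponentMk u).supp =
      {w | ∃ x ∈ P.support, (bicompGraph G).Reachable x w} := by
  classical
  have hadj {a b : V} := bicompGraph_sup_edge_adj (a := a) (b := b) hP huvP
  refine supp_connectedComponentMk_eq_setOf_reachable (s := {x | x ∈ P.support})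
    (fun a b h => hadj.2 (.inl h)) (fun a b h => ?_) P.start_mem_support (fun x hx => ?_)
  · rcases hadj.1 h with hG | hab | huv
    · exact .inl hG
    · exact .inr (P.fst_mem_support_of_mem_edges hab)
    · obtain ⟨⟨rfl, -⟩ | ⟨rfl, -⟩, -⟩ := (edge_adj ..).1 huv
      exacts [.inr P.start_mem_support, .inr P.end_mem_support]
  · refine ⟨(P.takeUntil x hx).transfer _ fun e he => ?_⟩
    induction e with | h a b
    exact hadj.2 (.inr (.inl (P.edges_takeUntil_subset_edges hx he)))

end

theorem stmt2_general {V : Type*} {G : SimpleGraph V} {u v : V} {P : G.Walk u v}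
    (hP : P.IsTrail) (huvP : s(u, v) ∉ P.edges) :
    (∀ e : Sym2 V, G.IsBridge e → e ∈ P.edges →
        ¬ (G.deleteEdges {e}).Reachable u v ∧ ¬ (G ⊔ edge u v).IsBridge e) ∧
    (∃ C : (bicompGraph (G ⊔ edge u v)).ConnectedComponent,
        C.supp = {w : V | ∃ x ∈ P.support, (bicompGraph G).Reachable x w}) :=
  ⟨fun _ he heP => ⟨(mem_edges_iff_not_reachable_deleteEdges he hP).1 heP,
    fun hF => ((isBridge_sup_edge_iff_notMem_edges hP huvP).1 hF).2 heP⟩,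
    _, supp_bicompGraph_sup_edge hP huvP⟩

/-- Let `u, v` be distinct nonadjacent vertices of a connected graph `G`, let `F` be
obtained from `G` by adding the edge `uv`, and let `P` be a path from `u` to `v` in `G`.
Then (1) every bridge `e` of `G` belonging to `P` is covered by `uv` (`u` and `v` lie in
different components of `G - e`; equivalently `e` is not a bridge of `F`), and
(2) the union of the vertex sets of the biconnected components of `G` crossed by `P`
is (induces) a biconnected component of `F`. -/
theorem stmt2 {α : Type*} [Fintype α] (G : SimpleGraph α) (hG : G.Connected)
    (u v : α) (huv : u ≠ v) (hnadj : ¬ G.Adj u v)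
    (F : SimpleGraph α) (hF : F = G ⊔ fromEdgeSet {s(u, v)})
    (P : G.Walk u v) (hP : P.IsPath) :
    (∀ e : Sym2 α, G.IsBridge e → e ∈ P.edges →
        ¬ (G.deleteEdges {e}).Reachable u v ∧ ¬ F.IsBridge e) ∧
    (∃ C : (bicompGraph F).ConnectedComponent,
        C.supp = {w : α | ∃ x ∈ P.support, (bicompGraph G).Reachable x w}) := by
  subst hF
  exact stmt2_general hP.isTrail (mt P.adj_of_mem_edges hnadj)
end

section
/- Let G and H be finite simple graphs such that H is nonempty, H has no isolated vertices, and |V(H)| ≤ |V(G)|. Then there exists an injective map φ : V(H) → V(G) such that the superposition F = G ⊕_φ H is connected if and only if c(G) ≤ |V(H)| − c(H) + 1 and one of the following holds: (i) H is connected, or (ii) H is disconnected and i(G) ≤ |V(H)| − c(H); here c denotes the number of connected components and i(G) the number of isolated vertices of G. -/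
open SimpleGraph

/-- The superposition `G ⊕_φ H` of `G` and `H` with respect to an injective map
`φ : V(H) ↪ V(G)`. -/
def superpose {α β : Type*} (G : SimpleGraph α) (H : SimpleGraph β) (φ : β ↪ α) :
    SimpleGraph α :=
  G ⊔ SimpleGraph.map φ H

/-!
Contract every component of `G` and of `H` to a point and let each vertex `x` of `H` join the
component of `φ x` to the component of `x`. This bipartite incidence graph has `c(G) + c(H)`
vertices and at most `|V(H)|` edges, and it is connected iff `G ⊕_φ H` is; this gives necessity of
the bound on `c(G)`.

For sufficiency, choose `φ` with a maximal reachability relation on the incidence graph. If that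
graph were disconnected, a spanning forest of it would have fewer than `|V(H)|` edges, so the
incidence of some `x` could be dropped without changing reachability. Moving `x` to a vertex `v`
outside its component, and the preimage of `v`, if any, to `φ x`, would then merge two
components.

The bound on `i(G)` then follows from that on `c(G)`: an edge of `G` forces `i(G) < c(G)`, while for
edgeless `G` the bound on `c(G)` forces `c(H) = 1`.
-/

section Reachability

variable {V W : Type*} {Γ : SimpleGraph V} {Γ' : SimpleGraph W}

theorem reachable_map_of_forall_adj {u v : V} (f : V → W)
    (h : ∀ a b, Γ.Reachable u a → Γ.Adj a b → Γ'.Reachable (f a) (f b))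
    (huv : Γ.Reachable u v) : Γ'.Reachable (f u) (f v) := by
  rw [reachable_iff_reflTransGen] at huv
  induction huv with
  | refl => exact .refl _
  | tail hua hab ih => exact ih.trans (h _ _ ((reachable_iff_reflTransGen _ _).2 hua) hab)

theorem connected_of_card_connectedComponent_le_one [Nonempty V]
    (h : ENat.card Γ.ConnectedComponent ≤ 1) : Γ.Connected := by
  rw [ENat.card_le_one_iff_subsingleton] at h
  exact ⟨fun _ _ => ConnectedComponent.exact (Subsingleton.elim _ _)⟩

end Reachability

section EdgeCounting

variable {V ι : Type*} {Γ : SimpleGraph V}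

theorem finite_of_connected_of_finite_edgeSet (hΓ : Γ.Connected) (hE : Γ.edgeSet.Finite) :
    Finite V := by
  obtain ⟨r⟩ := hΓ.nonempty
  have endpoints_finite : (⋃ e ∈ Γ.edgeSet, {v | v ∈ e}).Finite :=
    hE.biUnion fun e _ => by
      classical exact e.toFinset.finite_toSet.subset fun v hv => by simpa using hv
  refine Set.finite_univ_iff.1 ((endpoints_finite.insert r).subset fun v _ => ?_)
  rcases eq_or_ne v r with rfl | hvr
  · exact Set.mem_insert _ _
  · obtain ⟨w, hvw⟩ := mem_support_of_reachable hvr (hΓ.preconnected v r)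
    exact Set.mem_insert_of_mem _ (Set.mem_biUnion hvw (Sym2.mem_mk_left v w))

theorem card_le_encard_edgeSet_add_one (hΓ : Γ.Connected) :
    ENat.card V ≤ Γ.edgeSet.encard + 1 := by
  rcases Γ.edgeSet.finite_or_infinite with hE | hE
  · have := finite_of_connected_of_finite_edgeSet hΓ hE
    rw [ENat.card_eq_coe_natCard, ← hE.cast_ncard_eq]
    exact_mod_cast hΓ.card_vert_le_card_edgeSet_add_one
  · simp [hE.encard_eq]

theorem connected_of_isAcyclic_of_card_le [Finite V] [Nonempty V] (hΓ : Γ.IsAcyclic)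
    (h : Nat.card V ≤ Γ.edgeSet.ncard + 1) : Γ.Connected := by
  obtain ⟨T, hle, -, hT⟩ := connected_top.exists_isTree_le_of_le_of_isAcyclic le_top hΓ
  have card_T : T.edgeSet.ncard + 1 = Nat.card V := (isTree_iff_connected_and_card.1 hT).2
  have edgeSet_eq : Γ.edgeSet = T.edgeSet :=
    Set.eq_of_subset_of_ncard_le (edgeSet_mono hle) (by omega)
  exact edgeSet_inj.1 edgeSet_eq ▸ hT.connected

theorem exists_reachable_fromEdgeSet_image_compl_eq [Finite V] [Nonempty V] (e : ι → Sym2 V)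
    (hcard : Nat.card V ≤ Nat.card ι + 1) (he : ¬ (fromEdgeSet (Set.range e)).Connected) :
    ∃ i, (fromEdgeSet (e '' {i}ᶜ)).Reachable = (fromEdgeSet (Set.range e)).Reachable := by
  obtain ⟨F, hFe, hF, hreach⟩ := (fromEdgeSet (Set.range e)).exists_isAcyclic_reachable_eq_le
  have F_not_connected : ¬ F.Connected := by
    simpa only [connected_iff, preconnected_iff_reachable_eq_top, hreach] using he
  have hF_edge (f : F.edgeSet) : ∃ i, e i = f := (edgeSet_fromEdgeSet _ ▸ edgeSet_mono hFe f.2).1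
  choose index e_index using hF_edge
  have index_not_surjective : ¬ Function.Surjective index := fun hsurj =>
    F_not_connected <| connected_of_isAcyclic_of_card_le hF <| hcard.trans <|
      Nat.add_le_add_right (Nat.card_le_card_of_surjective index hsurj) 1
  obtain ⟨i, hi⟩ := not_forall.1 index_not_surjective
  have F_le : F ≤ fromEdgeSet (e '' {i}ᶜ) := fun a b hab =>
    (fromEdgeSet_adj _).2 ⟨⟨_, fun h => hi ⟨⟨s(a, b), hab⟩, h⟩, e_index ⟨_, hab⟩⟩, hab.ne⟩
  refine ⟨i, le_antisymm (Reachable.mono' (fromEdgeSet_mono (Set.image_subset_range _ _))) ?_⟩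
  exact hreach ▸ Reachable.mono' F_le

end EdgeCounting

section IncidenceGraph

variable {α β : Type*} (G : SimpleGraph α) (H : SimpleGraph β)

/-- The incidence of a vertex `x` of `H` under `φ`: the pair consisting of the component of `G`
containing `φ x` and the component of `H` containing `x`. -/
def incidence (φ : β → α) (x : β) : Sym2 (G.ConnectedComponent ⊕ H.ConnectedComponent) :=
  s(.inl (G.connectedComponentMk (φ x)), .inr (H.connectedComponentMk x))

/-- The bipartite graph on the components of `G` and the components of `H` whose edges are the
incidences under `φ`. It is used to decide whether `G ⊕_φ H` is connected; parallel incidences are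
merged into one edge. -/
def incidenceGraph (φ : β → α) : SimpleGraph (G.ConnectedComponent ⊕ H.ConnectedComponent) :=
  fromEdgeSet (Set.range (incidence G H φ))

variable {G H}

theorem incidenceGraph_adj (φ : β → α) (x : β) :
    (incidenceGraph G H φ).Adj (.inl (G.connectedComponentMk (φ x)))
      (.inr (H.connectedComponentMk x)) :=
  (fromEdgeSet_adj _).2 ⟨⟨x, rfl⟩, Sum.inl_ne_inr⟩

theorem reachable_map_of_forall_incidence {V : Type*} {Γ : SimpleGraph V} {φ : β → α}
    (f : G.ConnectedComponent ⊕ H.ConnectedComponent → V)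
    (h : ∀ x, Γ.Reachable (f (.inl (G.connectedComponentMk (φ x))))
      (f (.inr (H.connectedComponentMk x))))
    {c d : G.ConnectedComponent ⊕ H.ConnectedComponent}
    (hcd : (incidenceGraph G H φ).Reachable c d) : Γ.Reachable (f c) (f d) := by
  refine reachable_map_of_forall_adj f (fun a b _ hab => ?_) hcd
  obtain ⟨⟨x, hx⟩, -⟩ := (fromEdgeSet_adj _).1 hab
  rcases Sym2.eq_iff.1 hx with ⟨rfl, rfl⟩ | ⟨rfl, rfl⟩
  · exact h x
  · exact (h x).symm

theorem encard_edgeSet_incidenceGraph_le (φ : β → α) :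
    (incidenceGraph G H φ).edgeSet.encard ≤ ENat.card β := by
  calc (incidenceGraph G H φ).edgeSet.encard
      ≤ (Set.range (incidence G H φ)).encard :=
        Set.encard_le_encard (edgeSet_fromEdgeSet _ ▸ Set.sdiff_subset)
    _ ≤ ENat.card β := by
        rw [← Set.image_univ, ← Set.encard_univ]
        exact Set.encard_image_le _ _

theorem incidenceGraph_connected_of_forall_inl {φ : β → α} (u : α)
    (h : ∀ v, (incidenceGraph G H φ).Reachable (.inl (G.connectedComponentMk u))
      (.inl (G.connectedComponentMk v))) :
    (incidenceGraph G H φ).Connected := by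
  refine connected_iff_exists_forall_reachable _ |>.2 ⟨.inl (G.connectedComponentMk u), ?_⟩
  rintro (C | D)
  · exact C.ind h
  · exact D.ind fun x => (h (φ x)).trans (incidenceGraph_adj φ x).reachable

theorem incidenceGraph_connected_of_superpose_connected {φ : β ↪ α}
    (h : (superpose G H φ).Connected) : (incidenceGraph G H φ).Connected := by
  obtain ⟨u⟩ := h.nonempty
  refine incidenceGraph_connected_of_forall_inl u fun v => reachable_map_of_forall_adj
    (fun w => Sum.inl (G.connectedComponentMk w)) (fun _ _ _ hab => ?_) (h.preconnected u v)
  rcases hab with hab | ⟨-, x, y, hxy, rfl, rfl⟩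
  · rw [ConnectedComponent.connectedComponentMk_eq_of_adj hab]
  · have hy := incidenceGraph_adj (G := G) (H := H) φ y
    rw [← ConnectedComponent.connectedComponentMk_eq_of_adj hxy] at hy
    exact (incidenceGraph_adj φ x).reachable.trans hy.symm.reachable

theorem superpose_connected_of_incidenceGraph_connected [Nonempty α] {φ : β ↪ α}
    (h : (incidenceGraph G H φ).Connected) : (superpose G H φ).Connected := by
  have reachable_of_left {a b : α} (hab : G.Reachable a b) : (superpose G H φ).Reachable a b :=
    hab.mono le_sup_left
  have reachable_of_right {x y : β} (hxy : H.Reachable x y) :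
      (superpose G H φ).Reachable (φ x) (φ y) :=
    (hxy.map (SimpleGraph.Embedding.map φ H).toHom).mono le_sup_right
  let rep : G.ConnectedComponent ⊕ H.ConnectedComponent → α :=
    Sum.elim Quot.out fun C => φ C.out
  have reachable_rep_left (a : α) :
      (superpose G H φ).Reachable a (rep (.inl (G.connectedComponentMk a))) :=
    reachable_of_left (ConnectedComponent.exact (Quot.out_eq _).symm)
  have reachable_rep_right (x : β) :
      (superpose G H φ).Reachable (φ x) (rep (.inr (H.connectedComponentMk x))) :=
    reachable_of_right (ConnectedComponent.exact (Quot.out_eq _).symm)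
  refine ⟨fun u v => (reachable_rep_left u).trans (.trans ?_ (reachable_rep_left v).symm)⟩
  exact reachable_map_of_forall_incidence rep
    (fun x => (reachable_rep_left (φ x)).symm.trans (reachable_rep_right x)) (h.preconnected _ _)

end IncidenceGraph

section Exchange

variable {α β : Type*} {G : SimpleGraph α} {H : SimpleGraph β} [DecidableEq α] {φ : β ↪ α} {x : β}
  {v : α}

theorem swap_incidenceGraph_reachable
    (hx : (fromEdgeSet (incidence G H φ '' {x}ᶜ)).Reachable (.inl (G.connectedComponentMk (φ x)))
      (.inr (H.connectedComponentMk x)))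
    (hv : ¬ (incidenceGraph G H φ).Reachable (.inl (G.connectedComponentMk (φ x)))
      (.inl (G.connectedComponentMk v))) :
    (incidenceGraph G H (φ.trans (Equiv.swap (φ x) v).toEmbedding)).Reachable
      (.inl (G.connectedComponentMk (φ x))) (.inr (H.connectedComponentMk x)) := by
  -- A walk in the component of `φ x` never meets the incidence at `v`, so the swap keeps its edges.
  refine reachable_map_of_forall_adj id (fun a _ ha hab => Adj.reachable ?_) hx
  obtain ⟨⟨y, hyx, hy⟩, hne⟩ := (fromEdgeSet_adj _).1 hab
  have ha' : (incidenceGraph G H φ).Reachable (.inl (G.connectedComponentMk (φ x))) a :=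
    ha.mono (fromEdgeSet_mono (Set.image_subset_range _ _))
  have hyv : φ y ≠ v := by
    rintro rfl
    rcases Sym2.eq_iff.1 hy with ⟨rfl, rfl⟩ | ⟨rfl, rfl⟩
    · exact hv ha'
    · exact hv (ha'.trans (incidenceGraph_adj φ y).symm.reachable)
  refine (fromEdgeSet_adj _).2 ⟨⟨y, ?_⟩, hne⟩
  simpa [incidence, Equiv.swap_apply_of_ne_of_ne (φ.injective.ne hyx) hyv] using hy

theorem reachable_lt_swap_incidenceGraph_reachable
    (hx : (fromEdgeSet (incidence G H φ '' {x}ᶜ)).Reachable (.inl (G.connectedComponentMk (φ x)))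
      (.inr (H.connectedComponentMk x)))
    (hv : ¬ (incidenceGraph G H φ).Reachable (.inl (G.connectedComponentMk (φ x)))
      (.inl (G.connectedComponentMk v))) :
    (incidenceGraph G H φ).Reachable <
      (incidenceGraph G H (φ.trans (Equiv.swap (φ x) v).toEmbedding)).Reachable := by
  set ψ := φ.trans (Equiv.swap (φ x) v).toEmbedding
  have reach_x := swap_incidenceGraph_reachable hx hv
  have reach_v : (incidenceGraph G H ψ).Reachable (.inl (G.connectedComponentMk (φ x)))
      (.inl (G.connectedComponentMk v)) := by
    have hψx := incidenceGraph_adj (G := G) (H := H) ψ x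
    rw [show ψ x = v by simp [ψ]] at hψx
    exact reach_x.trans hψx.symm.reachable
  have reach_incidence (y : β) : (incidenceGraph G H ψ).Reachable
      (.inl (G.connectedComponentMk (φ y))) (.inr (H.connectedComponentMk y)) := by
    have hψy := (incidenceGraph_adj (G := G) (H := H) ψ y).reachable
    rcases eq_or_ne y x with rfl | hyx
    · exact reach_x
    rcases eq_or_ne (φ y) v with hyv | hyv
    · rw [show ψ y = φ x by simp [ψ, hyv]] at hψy
      exact hyv ▸ reach_v.symm.trans hψy
    · rwa [show ψ y = φ y from Equiv.swap_apply_of_ne_of_ne (φ.injective.ne hyx) hyv] at hψy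
  exact lt_of_le_not_ge (fun _ _ => reachable_map_of_forall_incidence id reach_incidence)
    fun hle => hv (hle _ _ reach_v)

end Exchange

section MaximalReachability

variable {α β : Type*} {G : SimpleGraph α} {H : SimpleGraph β}

theorem exists_incidenceGraph_reachable_lt [Nonempty α] [Finite G.ConnectedComponent]
    [Finite H.ConnectedComponent]
    (hcard : Nat.card (G.ConnectedComponent ⊕ H.ConnectedComponent) ≤ Nat.card β + 1) {φ : β ↪ α}
    (hφ : ¬ (incidenceGraph G H φ).Connected) :
    ∃ ψ : β ↪ α, (incidenceGraph G H φ).Reachable < (incidenceGraph G H ψ).Reachable := by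
  classical
  obtain ⟨x, hx⟩ := exists_reachable_fromEdgeSet_image_compl_eq (incidence G H φ) hcard hφ
  obtain ⟨v, hv⟩ : ∃ v, ¬ (incidenceGraph G H φ).Reachable (.inl (G.connectedComponentMk (φ x)))
      (.inl (G.connectedComponentMk v)) := by
    by_contra! hreach
    exact hφ (incidenceGraph_connected_of_forall_inl (φ x) hreach)
  exact ⟨_, reachable_lt_swap_incidenceGraph_reachable
    (hx ▸ (incidenceGraph_adj φ x).reachable) hv⟩

theorem exists_incidenceGraph_connected [Nonempty α] [Finite G.ConnectedComponent]
    [Finite H.ConnectedComponent] (hemb : Nonempty (β ↪ α))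
    (hcard : Nat.card (G.ConnectedComponent ⊕ H.ConnectedComponent) ≤ Nat.card β + 1) :
    ∃ φ : β ↪ α, (incidenceGraph G H φ).Connected := by
  obtain ⟨φ, -, hmax⟩ := exists_maximalFor_of_wellFoundedGT (fun _ : β ↪ α => True)
    (fun φ => (incidenceGraph G H φ).Reachable) ⟨hemb.some, trivial⟩
  by_contra! hno
  obtain ⟨ψ, hψ⟩ := exists_incidenceGraph_reachable_lt hcard (hno φ)
  exact hψ.not_ge (hmax trivial hψ.le)

end MaximalReachability

section IsolatedVertices

variable {α β : Type*} {G : SimpleGraph α} {H : SimpleGraph β}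

theorem encard_isIsolated_add_one_le (hG : G ≠ ⊥) :
    {v | G.IsIsolated v}.encard + 1 ≤ ENat.card G.ConnectedComponent := by
  have eq_of_mk_eq {v w : α} (hv : G.IsIsolated v)
      (h : G.connectedComponentMk v = G.connectedComponentMk w) : v = w := by
    by_contra hvw
    exact ((notMem_support_iff_isIsolated G).2 hv)
      (mem_support_of_reachable hvw (ConnectedComponent.exact h))
  have injOn : Set.InjOn G.connectedComponentMk {v | G.IsIsolated v} :=
    fun v hv w _ h => eq_of_mk_eq hv h
  obtain ⟨a, b, hab⟩ := ne_bot_iff_exists_adj.1 hG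
  have mk_notMem : G.connectedComponentMk a ∉ G.connectedComponentMk '' {v | G.IsIsolated v} := by
    rintro ⟨v, hv, hva⟩
    exact hv b (eq_of_mk_eq hv hva ▸ hab)
  rw [← injOn.encard_image, ← Set.encard_insert_of_notMem mk_notMem, ← Set.encard_univ]
  exact Set.encard_le_encard (Set.subset_univ _)

theorem encard_isIsolated_add_card_le [Finite β] [Nonempty β] (hemb : Nonempty (β ↪ α))
    (hcard : ENat.card G.ConnectedComponent + ENat.card H.ConnectedComponent ≤ ENat.card β + 1)
    (hH : ¬ H.Connected) :
    {v | G.IsIsolated v}.encard + ENat.card H.ConnectedComponent ≤ ENat.card β := by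
  rcases eq_or_ne G ⊥ with rfl | hG
  · have mk_injective : Function.Injective (⊥ : SimpleGraph α).connectedComponentMk :=
      fun _ _ h => reachable_bot.1 (ConnectedComponent.exact h)
    have card_le : ENat.card β ≤ ENat.card (⊥ : SimpleGraph α).ConnectedComponent :=
      ENat.card_le_card_of_injective (mk_injective.comp hemb.some.injective)
    have card_H_le_one : ENat.card H.ConnectedComponent ≤ 1 :=
      (ENat.add_le_add_iff_left ENat.card_lt_top_of_finite.ne).1
        ((add_le_add_left card_le _).trans hcard)
    exact absurd (connected_of_card_connectedComponent_le_one card_H_le_one) hH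
  · refine (ENat.add_le_add_iff_right ENat.one_ne_top).1 (le_trans ?_ hcard)
    rw [add_right_comm]
    exact add_le_add_left (encard_isIsolated_add_one_le hG) _

end IsolatedVertices

theorem stmt7_general {α β : Type*} [Nonempty α] [Finite β] (G : SimpleGraph α)
    (H : SimpleGraph β) (hemb : Nonempty (β ↪ α)) :
    (∃ φ : β ↪ α, (superpose G H φ).Connected) ↔
      ENat.card G.ConnectedComponent + ENat.card H.ConnectedComponent ≤ ENat.card β + 1 := by
  rw [← ENat.card_sum]
  constructor
  · rintro ⟨φ, hφ⟩
    exact (card_le_encard_edgeSet_add_one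
      (incidenceGraph_connected_of_superpose_connected hφ)).trans
        (add_le_add_left (encard_edgeSet_incidenceGraph_le φ) 1)
  · intro hcard
    have : Finite (G.ConnectedComponent ⊕ H.ConnectedComponent) :=
      ENat.card_lt_top.1 (hcard.trans_lt (by simp [ENat.card_eq_coe_natCard]))
    have : Finite G.ConnectedComponent := Finite.sum_left H.ConnectedComponent
    rw [ENat.card_eq_coe_natCard, ENat.card_eq_coe_natCard] at hcard
    obtain ⟨φ, hφ⟩ := exists_incidenceGraph_connected (G := G) (H := H) hemb
      (by exact_mod_cast hcard)
    exact ⟨φ, superpose_connected_of_incidenceGraph_connected hφ⟩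

/-- Let `H` be nonempty, without isolated vertices, and `|V(H)| ≤ |V(G)|`. Then there
is an injective `φ : V(H) ↪ V(G)` with `G ⊕_φ H` connected iff
`c(G) ≤ |V(H)| - c(H) + 1` and either (i) `H` is connected, or (ii) `H` is
disconnected and `i(G) ≤ |V(H)| - c(H)` (stated additively to avoid truncated
subtraction). -/
theorem stmt7 {α β : Type*} [Fintype α] [Fintype β]
    (G : SimpleGraph α) (H : SimpleGraph β)
    (hne : Nonempty β)
    (hiso : ∀ x : β, ∃ y : β, H.Adj x y)
    (hcard : Fintype.card β ≤ Fintype.card α) :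
    (∃ φ : β ↪ α, (superpose G H φ).Connected) ↔
      (Nat.card G.ConnectedComponent + Nat.card H.ConnectedComponent ≤
          Fintype.card β + 1 ∧
        (H.Connected ∨
          (¬ H.Connected ∧
            {v : α | ∀ w : α, ¬ G.Adj v w}.ncard + Nat.card H.ConnectedComponent ≤
              Fintype.card β))) := by
  obtain ⟨φ⟩ := Function.Embedding.nonempty_of_card_le hcard
  have : Nonempty α := hne.map φ
  have connected_iff_count := stmt7_general G H ⟨φ⟩
  have isolated_of_count := encard_isIsolated_add_card_le (G := G) (H := H) ⟨φ⟩
  simp only [ENat.card_eq_coe_natCard, Nat.card_eq_fintype_card (α := β), IsIsolated,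
    ← (Set.toFinite _).cast_ncard_eq] at connected_iff_count isolated_of_count
  norm_cast at connected_iff_count isolated_of_count
  tauto
end

section
/- Let G be a connected finite simple graph with ℓ = p(G) ≥ 2 pendant biconnected components, let P₁, …, P_ℓ be the pendant biconnected components of G, and let v₁, …, v_ℓ be pairwise nonadjacent vertices with v_i ∈ V(P_i) for each i. Let H be a finite simple graph with exactly ℓ vertices such that every connected component of H contains at least 2 vertices. Then there exists a bijection φ : V(H) → {v₁, …, v_ℓ} such that the superposition F = G ⊕_φ H is edge 2-connected. -/
open SimpleGraph

/-- A graph is edge 2-connected if it is connected and has no bridge. -/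
def TwoEdgeConnected {α : Type*} (G : SimpleGraph α) : Prop :=
  G.Connected ∧ ∀ e : Sym2 α, ¬ G.IsBridge e

/-- A biconnected component `C` of `G` is pendant if exactly one bridge of `G` has an
endpoint in `C`. -/
def IsPendant {α : Type*} (G : SimpleGraph α)
    (C : (bicompGraph G).ConnectedComponent) : Prop :=
  ∃! e : Sym2 α, G.IsBridge e ∧ ∃ v ∈ C.supp, v ∈ e

/-! The two sides of the bridges of `G` form a cross-free family of vertex sets, and a minimal side
contains a pendant component, so every side contains one of the chosen vertices. An edge of
`H` placed between the two sides of a bridge destroys that bridge, so it suffices to place `H` on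
the chosen vertices in such a way that every side is crossed by some edge of `H`.

Take a placement for which the set of crossed sides is maximal and suppose that a side `A` is not
crossed. Exchange a vertex `x` placed in `A` with a vertex `y` placed outside `A`. A side `B` that
does not separate `x` from `y` is unaffected. If `B` separates them, then, the family being
cross-free, `B` contains all or nothing of `A`, or all or nothing of the complement of `A`. In the
first case the neighbours of `x`, which lie in `A`, were on the same side of `B` as `x` and are now
opposite to it; in the second case the same holds for `y`. So the exchange makes `A` crossed and
leaves every crossed side crossed, against maximality.
-/

section Crossing

variable {α β : Type*} {H : SimpleGraph β} {A B : Set β} {x y z : β}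

/-- Some edge of `H` leaves the set `A`, that is, the edge boundary of `A` in `H` is nonempty. -/
def Crosses (H : SimpleGraph β) (A : Set β) : Prop :=
  ∃ x y, H.Adj x y ∧ x ∈ A ∧ y ∉ A

/-- The sets `A` and `B` do not cross: one of the four regions cut out by `A`, `B` and their
complements is empty. A family of sets is cross-free if this holds for any two of its members. -/
def NonCrossing (A B : Set β) : Prop :=
  A ⊆ B ∨ B ⊆ A ∨ Disjoint A B ∨ Codisjoint A B

theorem NonCrossing.preimage {A B : Set α} (h : NonCrossing A B) (f : β → α) :
    NonCrossing (f ⁻¹' A) (f ⁻¹' B) := by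
  rcases h with h | h | h | h
  · exact .inl (Set.preimage_mono h)
  · exact .inr (.inl (Set.preimage_mono h))
  · exact .inr (.inr (.inl (h.preimage f)))
  · refine .inr (.inr (.inr (codisjoint_iff.2 ?_)))
    exact congrArg (f ⁻¹' ·) (codisjoint_iff.1 h)

theorem crosses_of_adj (hxy : H.Adj x y) (hB : ¬(x ∈ B ↔ y ∈ B)) : Crosses H B := by
  by_cases hx : x ∈ B
  · exact ⟨x, y, hxy, hx, fun hy => hB (iff_of_true hx hy)⟩
  · exact ⟨y, x, hxy.symm, by_contra fun hy => hB (iff_of_false hx hy), hx⟩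

theorem crosses_preimage_swap_of_adj [DecidableEq β] (hxz : H.Adj x z) (hzB : z ∈ B ↔ x ∈ B)
    (hxy : ¬(x ∈ B ↔ y ∈ B)) : Crosses H (Equiv.swap x y ⁻¹' B) := by
  have hzy : z ≠ y := by
    rintro rfl
    exact hxy hzB.symm
  apply crosses_of_adj hxz
  rwa [Set.mem_preimage, Set.mem_preimage, Equiv.swap_apply_left,
    Equiv.swap_apply_of_ne_of_ne hxz.ne' hzy, hzB, Iff.comm]

theorem preimage_swap_eq_self [DecidableEq β] (h : x ∈ B ↔ y ∈ B) :
    Equiv.swap x y ⁻¹' B = B := by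
  ext z
  rw [Set.mem_preimage, Equiv.swap_apply_def]
  split_ifs with hx hy
  · rw [hx, h]
  · rw [hy, h]
  · rfl

theorem NonCrossing.mem_iff_mem_or (h : NonCrossing A B) {x x' y y' : β} (hx : x ∈ A)
    (hx' : x' ∈ A) (hy : y ∉ A) (hy' : y' ∉ A) : (x' ∈ B ↔ x ∈ B) ∨ (y' ∈ B ↔ y ∈ B) := by
  rcases h with h | h | h | h
  · exact .inl (iff_of_true (h hx') (h hx))
  · exact .inr (iff_of_false (fun hB => hy' (h hB)) fun hB => hy (h hB))
  · exact .inl (iff_of_false (h.notMem_of_mem_left hx') (h.notMem_of_mem_left hx))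
  · rw [codisjoint_iff_compl_le_right] at h
    exact .inr (iff_of_true (h hy') (h hy))

theorem NonCrossing.crosses_preimage_swap [DecidableEq β] (hAB : NonCrossing A B)
    (hH : ∀ x, ∃ y, H.Adj x y) (hA : ¬Crosses H A) (hx : x ∈ A) (hy : y ∉ A)
    (hxy : ¬(x ∈ B ↔ y ∈ B)) : Crosses H (Equiv.swap x y ⁻¹' B) := by
  obtain ⟨x', hxx'⟩ := hH x
  obtain ⟨y', hyy'⟩ := hH y
  have hx' : x' ∈ A := by_contra fun h => hA ⟨x, x', hxx', hx, h⟩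
  have hy' : y' ∉ A := fun h => hA ⟨y', y, hyy'.symm, h, hy⟩
  rcases hAB.mem_iff_mem_or hx hx' hy hy' with h | h
  · exact crosses_preimage_swap_of_adj hxx' h hxy
  · rw [Equiv.swap_comm]
    exact crosses_preimage_swap_of_adj hyy' h (mt Iff.symm hxy)

theorem exists_perm_forall_crosses (hH : ∀ x, ∃ y, H.Adj x y) {𝓢 : Set (Set β)} (hfin : 𝓢.Finite)
    (hnonempty : ∀ A ∈ 𝓢, A.Nonempty) (hcompl : ∀ A ∈ 𝓢, Aᶜ.Nonempty)
    (hcross : ∀ A ∈ 𝓢, ∀ B ∈ 𝓢, NonCrossing A B) :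
    ∃ σ : Equiv.Perm β, ∀ A ∈ 𝓢, Crosses H (σ ⁻¹' A) := by
  classical
  let crossed (σ : Equiv.Perm β) : Set (Set β) := {A ∈ 𝓢 | Crosses H (σ ⁻¹' A)}
  have hfinite : (crossed '' Set.univ).Finite :=
    hfin.finite_subsets.subset (Set.image_subset_iff.2 fun _ _ => Set.sep_subset _ _)
  obtain ⟨σ, -, hmax⟩ := Set.Finite.exists_maximalFor' crossed _ hfinite Set.univ_nonempty
  refine ⟨σ, fun A hA => by_contra fun hnot => ?_⟩
  obtain ⟨x, hx⟩ := (hnonempty A hA).preimage σ.surjective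
  obtain ⟨y, hy⟩ := (hcompl A hA).preimage σ.surjective
  have hsep {B : Set β} (hB : B ∈ 𝓢) (hxy : ¬(σ x ∈ B ↔ σ y ∈ B)) :
      B ∈ crossed (σ * Equiv.swap x y) :=
    ⟨hB, ((hcross A hA B hB).preimage σ).crosses_preimage_swap hH hnot hx hy hxy⟩
  have hle : crossed σ ⊆ crossed (σ * Equiv.swap x y) := by
    rintro B ⟨hB, hσB⟩
    by_cases hxy : σ x ∈ B ↔ σ y ∈ B
    · refine ⟨hB, ?_⟩
      rwa [Equiv.Perm.coe_mul, Set.preimage_comp, preimage_swap_eq_self (B := σ ⁻¹' B) hxy]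
    · exact hsep hB hxy
  have hmem : A ∈ crossed (σ * Equiv.swap x y) := hsep hA fun h => hy (h.1 hx)
  exact hnot (hmax (Set.mem_univ _) hle hmem).2

end Crossing

section BridgeSide

variable {α : Type*} {G : SimpleGraph α} {a b c d w : α}

/-- The vertices that can be reached from `a` after deletion of the edge `ab`. If `ab` is a bridge
of a connected graph, this is the side of the bridge that contains `a`. -/
def bridgeSide (G : SimpleGraph α) (a b : α) : Set α :=
  {w | (G.deleteEdges {s(a, b)}).Reachable a w}

theorem bridgeSide_union_bridgeSide (hG : G.Connected) (a b : α) :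
    bridgeSide G a b ∪ bridgeSide G b a = Set.univ := by
  refine Set.eq_univ_of_forall fun w => by_contra fun hw => ?_
  obtain ⟨p⟩ := hG a w
  obtain ⟨⟨⟨u, v⟩, huv⟩, -, hu, hv⟩ := p.exists_boundary_dart _ (.inl .rfl) hw
  have hne : s(u, v) ≠ s(a, b) := by
    intro h
    rcases Sym2.eq_iff.1 h with ⟨rfl, rfl⟩ | ⟨rfl, rfl⟩
    · exact hv (.inr .rfl)
    · exact hv (.inl .rfl)
  refine hv (hu.imp (fun h => h.trans ?_) fun h => h.trans ?_)
  · exact (deleteEdges_adj.2 ⟨huv, hne⟩).reachable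
  · exact (deleteEdges_adj.2 ⟨huv, Sym2.eq_swap (a := a) ▸ hne⟩).reachable

theorem compl_bridgeSide (hG : G.Connected) (hab : G.IsBridge s(a, b)) :
    (bridgeSide G a b)ᶜ = bridgeSide G b a := by
  refine Set.Subset.antisymm ?_ fun w hb ha => ?_
  · exact Set.compl_subset_iff_union.2 (bridgeSide_union_bridgeSide hG a b)
  · rw [bridgeSide, Sym2.eq_swap] at hb
    exact hab (Reachable.trans ha hb.symm)

theorem reachable_deleteEdges_of_mem_bridgeSide (hc : c ∉ bridgeSide G a b)
    (hw : w ∈ bridgeSide G a b) : (G.deleteEdges {s(c, d)}).Reachable a w := by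
  classical
  obtain ⟨p⟩ := hw
  refine .mono (deleteEdges_mono (deleteEdges_le {s(a, b)})) ?_
  refine reachable_deleteEdges_iff_exists_walk.2 ⟨p, fun hp => hc ?_⟩
  exact ⟨p.takeUntil c (p.fst_mem_support_of_mem_edges hp)⟩

theorem bridgeSide_subset_or_disjoint (hc : c ∉ bridgeSide G a b) :
    bridgeSide G a b ⊆ bridgeSide G c d ∨ Disjoint (bridgeSide G a b) (bridgeSide G c d) := by
  by_cases ha : a ∈ bridgeSide G c d
  · exact .inl fun w hw => ha.trans (reachable_deleteEdges_of_mem_bridgeSide hc hw)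
  · refine .inr (Set.disjoint_left.2 fun w hw hw' => ha ?_)
    exact hw'.trans (reachable_deleteEdges_of_mem_bridgeSide hc hw).symm

theorem nonCrossing_bridgeSide (hG : G.Connected) (hab : G.IsBridge s(a, b)) (c d : α) :
    NonCrossing (bridgeSide G a b) (bridgeSide G c d) := by
  by_cases hc : c ∈ bridgeSide G a b
  · have hc' : c ∉ bridgeSide G b a := by
      rwa [← compl_bridgeSide hG hab, Set.notMem_compl_iff]
    have h := bridgeSide_subset_or_disjoint (d := d) hc'
    rw [← compl_bridgeSide hG hab] at h
    rcases h with h | h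
    · exact .inr (.inr (.inr (codisjoint_iff_compl_le_right.2 h)))
    · exact .inr (.inl (Set.disjoint_compl_left_iff_subset.1 h))
  · exact (bridgeSide_subset_or_disjoint hc).imp_right fun h => .inr (.inl h)

end BridgeSide

section Pendant

variable {α : Type*} {G : SimpleGraph α} {a b c d : α}

theorem bicompGraph_le_deleteEdges {e : Sym2 α} (he : G.IsBridge e) :
    bicompGraph G ≤ G.deleteEdges {e} :=
  deleteEdges_anti (Set.singleton_subset_iff.2 he)

theorem supp_subset_bridgeSide (hab : G.IsBridge s(a, b)) :
    ((bicompGraph G).connectedComponentMk a).supp ⊆ bridgeSide G a b := fun _ hw =>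
  (ConnectedComponent.exact hw).symm.mono (bicompGraph_le_deleteEdges hab)

theorem bridgeSide_ssubset_bridgeSide (hG : G.Connected) (hab : G.IsBridge s(a, b))
    (hcd : G.IsBridge s(c, d)) (hne : s(c, d) ≠ s(a, b)) (hac : (bicompGraph G).Reachable a c) :
    bridgeSide G d c ⊂ bridgeSide G a b := by
  have ha : a ∉ bridgeSide G d c := by
    rw [← compl_bridgeSide hG hcd, Set.notMem_compl_iff]
    exact hac.symm.mono (bicompGraph_le_deleteEdges hcd)
  have hcd' : (G.deleteEdges {s(a, b)}).Adj c d :=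
    deleteEdges_adj.2 ⟨hcd.reachable_iff_adj.1 (hG c d), hne⟩
  have had : (G.deleteEdges {s(a, b)}).Reachable a d :=
    (hac.mono (bicompGraph_le_deleteEdges hab)).trans hcd'.reachable
  refine ⟨fun w hw => had.trans (reachable_deleteEdges_of_mem_bridgeSide ha hw), fun h => ?_⟩
  exact ha (h Reachable.rfl)

theorem exists_isPendant_supp_subset_bridgeSide [Finite α] (hG : G.Connected)
    (hab : G.IsBridge s(a, b)) :
    ∃ C : (bicompGraph G).ConnectedComponent, IsPendant G C ∧ C.supp ⊆ bridgeSide G a b := by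
  let sides : Set (Set α) := {A | ∃ a b, G.IsBridge s(a, b) ∧ bridgeSide G a b = A}
  obtain ⟨_, hle, ⟨a', b', hab', rfl⟩, hmin⟩ :=
    sides.toFinite.exists_le_minimal ⟨a, b, hab, rfl⟩
  refine ⟨_, ⟨s(a', b'), ⟨hab', a', rfl, Sym2.mem_mk_left _ _⟩, ?_⟩,
    (supp_subset_bridgeSide hab').trans hle⟩
  rintro f ⟨hf, c, hc, hcf⟩
  obtain ⟨d, rfl⟩ := Sym2.mem_iff_exists.1 hcf
  by_contra hne
  have hlt := bridgeSide_ssubset_bridgeSide hG hab' hf hne (ConnectedComponent.exact hc).symm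
  exact hlt.not_subset (hmin ⟨d, c, Sym2.eq_swap ▸ hf, rfl⟩ hlt.subset)

end Pendant

section Superpose

variable {α β : Type*} {G : SimpleGraph α} {H : SimpleGraph β}

theorem not_isBridge_of_adj_of_mem_bridgeSide {F : SimpleGraph α} {a b x y : α}
    (hG : G.Connected) (hGF : G ≤ F) (hF : F.Adj x y) (hxy : ¬G.Adj x y)
    (hx : x ∈ bridgeSide G a b) (hy : y ∉ bridgeSide G a b) : ¬F.IsBridge s(a, b) := by
  intro hbridge
  have hab : G.IsBridge s(a, b) := hbridge.anti hGF
  have hne : s(x, y) ≠ s(a, b) := by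
    intro h
    rw [← mem_edgeSet, h] at hxy
    exact hxy (hab.reachable_iff_adj.1 (hG a b))
  have hby : y ∈ bridgeSide G b a := by rwa [← compl_bridgeSide hG hab]
  rw [bridgeSide, Sym2.eq_swap] at hby
  have hle : G.deleteEdges {s(a, b)} ≤ F.deleteEdges {s(a, b)} := deleteEdges_mono hGF
  have hadj : (F.deleteEdges {s(a, b)}).Adj x y := deleteEdges_adj.2 ⟨hF, hne⟩
  exact hbridge (((hx.mono hle).trans hadj.reachable).trans (hby.mono hle).symm)

theorem twoEdgeConnected_superpose (hG : G.Connected) {φ : β ↪ α}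
    (hφ : ∀ x y, H.Adj x y → ¬G.Adj (φ x) (φ y))
    (hcross : ∀ a b, G.IsBridge s(a, b) → Crosses H (φ ⁻¹' bridgeSide G a b)) :
    TwoEdgeConnected (superpose G H φ) := by
  have hle : G ≤ superpose G H φ := le_sup_left
  refine ⟨hG.mono hle, ?_⟩
  rintro ⟨a, b⟩ hbridge
  obtain ⟨x, y, hxy, hx, hy⟩ := hcross a b (hbridge.anti hle)
  have hF : (superpose G H φ).Adj (φ x) (φ y) := .inr (H.map_adj_apply.2 hxy)
  exact not_isBridge_of_adj_of_mem_bridgeSide hG hle hF (hφ x y hxy) hx hy hbridge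

end Superpose

theorem injective_of_mem_supp {α ι : Type*} {K : SimpleGraph α} {P : ι → K.ConnectedComponent}
    (hP : Function.Injective P) {v : ι → α} (hv : ∀ i, v i ∈ (P i).supp) :
    Function.Injective v := fun i j hij =>
  hP (ConnectedComponent.eq_of_common_vertex (hv i) (hij ▸ hv j))

theorem stmt12_general {α β : Type*} [Finite α] (G : SimpleGraph α) (hG : G.Connected) (S : Set α)
    (hind : G.IsIndepSet S)
    (hS : ∀ C : (bicompGraph G).ConnectedComponent, IsPendant G C → (C.supp ∩ S).Nonempty)
    (H : SimpleGraph β) (e : β ≃ S) (hcomp : ∀ x : β, ∃ y : β, y ≠ x ∧ H.Reachable x y) :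
    ∃ φ : β ↪ α, Set.range φ = S ∧ TwoEdgeConnected (superpose G H φ) := by
  let φ₀ : β ↪ α := e.toEmbedding.trans (.subtype _)
  have hφ₀ : Set.range φ₀ = S := (e.surjective.range_comp _).trans Subtype.range_val
  have : Finite β := .of_injective φ₀ φ₀.injective
  have hH (x : β) : ∃ y, H.Adj x y := by
    obtain ⟨y, hyx, ⟨p⟩⟩ := hcomp x
    exact ⟨p.snd, p.adj_snd (p.not_nil_of_ne hyx.symm)⟩
  have hside {a b : α} (hab : G.IsBridge s(a, b)) : (φ₀ ⁻¹' bridgeSide G a b).Nonempty := by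
    obtain ⟨C, hC, hsub⟩ := exists_isPendant_supp_subset_bridgeSide hG hab
    obtain ⟨w, hwC, hwS⟩ := hS C hC
    obtain ⟨x, rfl⟩ := hφ₀.symm ▸ hwS
    exact ⟨x, hsub hwC⟩
  let 𝓢 : Set (Set β) := {A | ∃ a b, G.IsBridge s(a, b) ∧ φ₀ ⁻¹' bridgeSide G a b = A}
  obtain ⟨σ, hσ⟩ : ∃ σ : Equiv.Perm β, ∀ A ∈ 𝓢, Crosses H (σ ⁻¹' A) := by
    apply exists_perm_forall_crosses hH 𝓢.toFinite
    · rintro _ ⟨a, b, hab, rfl⟩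
      exact hside hab
    · rintro _ ⟨a, b, hab, rfl⟩
      rw [← Set.preimage_compl, compl_bridgeSide hG hab]
      exact hside (Sym2.eq_swap ▸ hab)
    · rintro _ ⟨a, b, hab, rfl⟩ _ ⟨c, d, -, rfl⟩
      exact (nonCrossing_bridgeSide hG hab c d).preimage φ₀
  refine ⟨σ.toEmbedding.trans φ₀, (σ.surjective.range_comp φ₀).trans hφ₀,
    twoEdgeConnected_superpose hG (fun x y hxy => ?_) fun a b hab => hσ _ ⟨a, b, hab, rfl⟩⟩
  exact hind (e _).2 (e _).2 (φ₀.injective.ne (σ.injective.ne hxy.ne))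

/-- Let `G` be connected with pendant biconnected components `P 0, …, P (ℓ-1)`, `ℓ ≥ 2`,
and let `v i ∈ P i` be pairwise nonadjacent vertices. Let `H` have exactly `ℓ` vertices
with every connected component of `H` containing at least 2 vertices. Then there is an
injection `φ : V(H) ↪ V(G)` with range `{v 0, …, v (ℓ-1)}` (a bijection onto it) such
that `F = G ⊕_φ H` is edge 2-connected. -/
theorem stmt12 {α β : Type*} [Fintype α] [Fintype β]
    (G : SimpleGraph α) (hG : G.Connected) (ℓ : ℕ) (hℓ : 2 ≤ ℓ)
    (P : Fin ℓ → (bicompGraph G).ConnectedComponent)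
    (hPinj : Function.Injective P)
    (hPpend : ∀ i, IsPendant G (P i))
    (hPall : ∀ C : (bicompGraph G).ConnectedComponent, IsPendant G C → ∃ i, P i = C)
    (v : Fin ℓ → α) (hv : ∀ i, v i ∈ (P i).supp)
    (hvnadj : ∀ i j, i ≠ j → ¬ G.Adj (v i) (v j))
    (H : SimpleGraph β) (hcard : Fintype.card β = ℓ)
    (hcomp : ∀ x : β, ∃ y : β, y ≠ x ∧ H.Reachable x y) :
    ∃ φ : β ↪ α, Set.range (⇑φ) = Set.range v ∧
      TwoEdgeConnected (superpose G H φ) :=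
  stmt12_general G hG (Set.range v) (Pairwise.range_pairwise fun i j => hvnadj i j)
    (fun C hC => (hPall C hC).elim fun i hi => ⟨v i, hi ▸ hv i, i, rfl⟩) H
    ((Fintype.equivFinOfCardEq hcard).trans (.ofInjective v (injective_of_mem_supp hPinj hv))) hcomp
end
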